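/- For every point $m$ in the open unit ball model of $\mathbb{H}^{n+1}$, the integral of the Poisson kernel at exponent $n$ over the boundary sphere equals the volume of the sphere: $\int_{S^n} \big(\frac{1-|m|^2}{|m-\xi|^2}\big)^n d\xi = \mathrm{vol}(S^n)$, where $d\xi$ is the standard surface measure on $S^n$. -/

import Mathlib

noncomputable section

open MeasureTheory

/-!
Identify a Euclidean space `E` with the future light cone of `ℝ × E` through `x ↦ (‖x‖, x)`. The
Lorentz boost taking the point of the hyperboloid with Poincaré ball coordinate `m` to the apex
preserves the cone, and thus becomes a positively homogeneous bijection of `E`. If `t x` denotes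
the time component of the boosted point, the Poisson kernel of `m` at `ξ` is `1 / t ξ`. The
invariant measure of the light cone is `dx / ‖x‖`, so the Jacobian of the bijection is
`t x / ‖x‖`, and pulling back the unit ball gives `vol (ball 0 1) = ∫_{t < 1} t x / ‖x‖ dx`. In
polar coordinates the right-hand side is `(n + 1)⁻¹ ∫ (t ξ)⁻ⁿ dξ`.
-/

open Set Metric Module
open scoped ENNReal RealInnerProductSpace

section PolarCoordinates

lemma succ_mul_volumeIoiPow_mul_lt_one (n : ℕ) {a : ℝ} (ha : 0 < a) :
    (n + 1 : ℕ) * Measure.volumeIoiPow n {r | r.1 * a < 1} = ENNReal.ofReal (a⁻¹ ^ (n + 1)) := by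
  have h_Iio : {r : Ioi (0 : ℝ) | r.1 * a < 1} = Iio ⟨a⁻¹, inv_pos.2 ha⟩ := by
    ext r
    simp only [mem_ofPred_eq, mem_Iio, ← Subtype.coe_lt_coe, ← one_div, lt_div_iff₀ ha]
  rw [h_Iio, Measure.volumeIoiPow_apply_Iio, ← ENNReal.ofReal_natCast,
    ← ENNReal.ofReal_mul (Nat.cast_nonneg _), Nat.cast_succ, mul_div_cancel₀ _ (by positivity)]

variable {E : Type*} [NormedAddCommGroup E] [NormedSpace ℝ E] [FiniteDimensional ℝ E]
  [MeasurableSpace E] [BorelSpace E] (μ : Measure E) [μ.IsAddHaarMeasure]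

lemma setLIntegral_compl_zero_eq_lintegral_toSphere {f : E → ℝ≥0∞} (hf : Measurable f) :
    ∫⁻ x in {0}ᶜ, f x ∂μ = ∫⁻ ξ : sphere (0 : E) 1, ∫⁻ r : Ioi (0 : ℝ),
      f (r.1 • ξ.1) ∂Measure.volumeIoiPow (finrank ℝ E - 1) ∂μ.toSphere := by
  have hf_polar : Measurable fun p : sphere (0 : E) 1 × Ioi (0 : ℝ) ↦ f (p.2.1 • p.1.1) :=
    hf.comp (Continuous.measurable (by fun_prop))
  rw [← lintegral_prod _ hf_polar.aemeasurable,
    ← μ.measurePreserving_homeomorphUnitSphereProd.lintegral_comp hf_polar,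
    ← lintegral_subtype_comap (measurableSet_singleton _).compl]
  refine lintegral_congr fun x ↦ ?_
  have hx : ‖x.1‖ ≠ 0 := norm_ne_zero_iff.2 x.2
  simp [smul_smul, hx]

lemma finrank_mul_setLIntegral_lt_one_sdiff_zero {ρ : E → ℝ} {g : E → ℝ≥0∞}
    (hρ : Measurable ρ) (hg : Measurable g) (hρ_pos : ∀ x ≠ 0, 0 < ρ x)
    (hρ_smul : ∀ r > 0, ∀ x, ρ (r • x) = r * ρ x) (hg_smul : ∀ r > (0 : ℝ), ∀ x, g (r • x) = g x) :
    finrank ℝ E * ∫⁻ x in {x | ρ x < 1} \ {0}, g x ∂μ =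
      ∫⁻ ξ : sphere (0 : E) 1, ENNReal.ofReal ((ρ ξ)⁻¹ ^ finrank ℝ E) * g ξ ∂μ.toSphere := by
  nontriviality E using μ.toSphere_eq_zero_iff.2
  have hs : MeasurableSet {x | ρ x < 1} := measurableSet_lt hρ measurable_const
  rw [sdiff_eq, ← Measure.restrict_restrict hs, ← lintegral_indicator hs,
    setLIntegral_compl_zero_eq_lintegral_toSphere μ (hg.indicator hs),
    ← lintegral_const_mul' _ _ (ENNReal.natCast_ne_top _)]
  refine lintegral_congr fun ξ ↦ ?_
  have h_ray : ∀ r : Ioi (0 : ℝ), {x | ρ x < 1}.indicator g (r.1 • ξ.1) =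
      {r : Ioi (0 : ℝ) | r.1 * ρ ξ < 1}.indicator (fun _ ↦ g ξ) r := fun r ↦ by
    simp only [indicator_apply, mem_ofPred_eq, hρ_smul r r.2, hg_smul r r.2]
  have h_ray_meas : MeasurableSet {r : Ioi (0 : ℝ) | r.1 * ρ ξ < 1} :=
    measurableSet_lt (by fun_prop) measurable_const
  have h_succ : finrank ℝ E - 1 + 1 = finrank ℝ E := Nat.sub_add_cancel finrank_pos
  rw [lintegral_congr h_ray, lintegral_indicator_const h_ray_meas, mul_comm (g ξ), ← mul_assoc]
  congr 1
  simpa only [h_succ] using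
    succ_mul_volumeIoiPow_mul_lt_one (finrank ℝ E - 1) (hρ_pos ξ (ne_zero_of_mem_unit_sphere ξ))

end PolarCoordinates

section Derivatives

lemma det_id_add_smulRight {R M : Type*} [CommRing R] [TopologicalSpace R] [AddCommGroup M]
    [TopologicalSpace M] [Module R M] [ContinuousSMul R M] [ContinuousAdd M] [Module.Free R M]
    [Module.Finite R M] (f : M →L[R] R) (v : M) :
    (ContinuousLinearMap.id R M + f.smulRight v).det = 1 + f v :=
  LinearMap.transvection.det (f : M →ₗ[R] R) v

lemma hasFDerivAt_norm_of_ne_zero {E : Type*} [NormedAddCommGroup E] [InnerProductSpace ℝ E]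
    {x : E} (hx : x ≠ 0) :
    HasFDerivAt (fun y : E ↦ ‖y‖) (‖x‖⁻¹ • innerSL ℝ x) x := by
  have h_sqrt := (hasStrictFDerivAt_norm_sq x).hasFDerivAt.sqrt (by simpa using hx)
  simp only [Real.sqrt_sq (norm_nonneg _)] at h_sqrt
  convert h_sqrt using 1
  ext y
  simp only [smul_apply, coe_innerSL_apply, smul_eq_mul, one_div, mul_inv_rev, nsmul_eq_mul,
    Nat.cast_ofNat]
  field_simp

end Derivatives

section LorentzFactor

variable {E : Type*} [SeminormedAddCommGroup E]

/-- The time coordinate of the point of the unit hyperboloid in `ℝ × E` with space coordinate `w`,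
that is, the Lorentz factor of a particle of proper velocity `w`. -/
def lorentzFactor (w : E) : ℝ := √(1 + ‖w‖ ^ 2)

lemma lorentzFactor_nonneg (w : E) : 0 ≤ lorentzFactor w := Real.sqrt_nonneg _

lemma norm_sq_eq_lorentzFactor_sq_sub_one (w : E) : ‖w‖ ^ 2 = lorentzFactor w ^ 2 - 1 := by
  rw [lorentzFactor, Real.sq_sqrt (by positivity), add_sub_cancel_left]

lemma norm_lt_lorentzFactor (w : E) : ‖w‖ < lorentzFactor w :=
  Real.lt_sqrt_of_sq_lt (lt_one_add _)

lemma lorentzFactor_add_one_ne_zero (w : E) : lorentzFactor w + 1 ≠ 0 :=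
  (add_pos_of_nonneg_of_pos (lorentzFactor_nonneg w) one_pos).ne'

lemma lorentzFactor_neg (w : E) : lorentzFactor (-w) = lorentzFactor w := by
  rw [lorentzFactor, norm_neg, lorentzFactor]

end LorentzFactor

section LorentzBoost

variable {E : Type*} [NormedAddCommGroup E] [InnerProductSpace ℝ E]

/-- The time component of the image of the light-cone point `(‖x‖, x)` under the Lorentz boost that
takes the hyperboloid point `(lorentzFactor w, w)` to the apex `(1, 0)`. -/
def boostTime (w x : E) : ℝ := lorentzFactor w * ‖x‖ - ⟪w, x⟫

/-- The space component of the image of the light-cone point `(‖x‖, x)` under the Lorentz boost that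
takes the hyperboloid point `(lorentzFactor w, w)` to the apex `(1, 0)`. -/
def boostSpace (w x : E) : E := x + (⟪w, x⟫ / (lorentzFactor w + 1) - ‖x‖) • w

@[fun_prop]
lemma continuous_boostTime (w : E) : Continuous (boostTime w) := by
  unfold boostTime
  fun_prop

lemma boostTime_smul (w : E) {r : ℝ} (hr : 0 ≤ r) (x : E) :
    boostTime w (r • x) = r * boostTime w x := by
  simp only [boostTime, norm_smul, inner_smul_right, Real.norm_of_nonneg hr]
  ring

lemma boostTime_pos (w : E) {x : E} (hx : x ≠ 0) : 0 < boostTime w x :=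
  sub_pos.2 <| (real_inner_le_norm w x).trans_lt <|
    mul_lt_mul_of_pos_right (norm_lt_lorentzFactor w) (norm_pos_iff.2 hx)

lemma boostTime_zero (w : E) : boostTime w 0 = 0 := by simp [boostTime]

lemma boostTime_nonneg (w x : E) : 0 ≤ boostTime w x := by
  rcases eq_or_ne x 0 with rfl | hx
  · exact (boostTime_zero w).ge
  · exact (boostTime_pos w hx).le

lemma norm_boostSpace (w x : E) : ‖boostSpace w x‖ = boostTime w x := by
  refine (sq_eq_sq₀ (norm_nonneg _) (boostTime_nonneg w x)).1 ?_
  have hw := lorentzFactor_add_one_ne_zero w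
  rw [boostSpace, norm_add_sq_real, norm_smul, mul_pow, norm_sq_eq_lorentzFactor_sq_sub_one w,
    inner_smul_right, real_inner_comm w x, Real.norm_eq_abs, sq_abs, boostTime]
  field_simp
  ring

lemma boostSpace_zero (w : E) : boostSpace w 0 = 0 := by simp [boostSpace]

lemma leftInverse_boostSpace_neg (w : E) :
    Function.LeftInverse (boostSpace (-w)) (boostSpace w) := by
  intro x
  have hw := lorentzFactor_add_one_ne_zero w
  have h_coeff : ⟪w, boostSpace w x⟫ / (lorentzFactor w + 1) + ‖boostSpace w x‖ =
      ‖x‖ - ⟪w, x⟫ / (lorentzFactor w + 1) := by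
    rw [norm_boostSpace, boostTime, boostSpace, inner_add_right, inner_smul_right,
      real_inner_self_eq_norm_sq, norm_sq_eq_lorentzFactor_sq_sub_one]
    field_simp
    ring
  calc boostSpace (-w) (boostSpace w x)
    _ = boostSpace w x + (⟪w, boostSpace w x⟫ / (lorentzFactor w + 1) + ‖boostSpace w x‖) • w := by
      rw [boostSpace, lorentzFactor_neg, inner_neg_left]
      module
    _ = x := by
      rw [h_coeff, boostSpace]
      module

lemma bijective_boostSpace (w : E) : Function.Bijective (boostSpace w) := by
  have h_right := leftInverse_boostSpace_neg (-w)
  rw [neg_neg] at h_right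
  exact ⟨(leftInverse_boostSpace_neg w).injective, h_right.surjective⟩

lemma preimage_boostSpace_ball (w : E) :
    boostSpace w ⁻¹' ball 0 1 = {x | boostTime w x < 1} := by
  ext x
  rw [mem_preimage, mem_ball_zero_iff, norm_boostSpace, mem_ofPred_eq]

lemma image_boostSpace (w : E) :
    boostSpace w '' ({x | boostTime w x < 1} \ {0}) = ball 0 1 \ {0} := by
  rw [← preimage_boostSpace_ball, image_sdiff (bijective_boostSpace w).injective,
    image_preimage_eq _ (bijective_boostSpace w).surjective, image_singleton, boostSpace_zero]

lemma hasFDerivAt_boostSpace (w : E) {x : E} (hx : x ≠ 0) :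
    HasFDerivAt (boostSpace w) (ContinuousLinearMap.id ℝ E +
      ((lorentzFactor w + 1)⁻¹ • innerSL ℝ w - ‖x‖⁻¹ • innerSL ℝ x).smulRight w) x := by
  have h_coeff := ((innerSL ℝ w).hasFDerivAt.const_smul (lorentzFactor w + 1)⁻¹).sub
    (hasFDerivAt_norm_of_ne_zero hx)
  refine ((hasFDerivAt_id x).add (h_coeff.smul_const w)).congr_of_eventuallyEq
    (.of_forall fun y ↦ ?_)
  simp [boostSpace, div_eq_inv_mul]

lemma det_fderiv_boostSpace [FiniteDimensional ℝ E] (w : E) {x : E} (hx : x ≠ 0) :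
    (fderiv ℝ (boostSpace w) x).det = boostTime w x / ‖x‖ := by
  have hw := lorentzFactor_add_one_ne_zero w
  have hx' := norm_ne_zero_iff.2 hx
  rw [(hasFDerivAt_boostSpace w hx).fderiv, det_id_add_smulRight]
  simp only [sub_apply, smul_apply, innerSL_apply_apply, real_inner_self_eq_norm_sq,
    norm_sq_eq_lorentzFactor_sq_sub_one w, boostTime, smul_eq_mul, real_inner_comm w x]
  field_simp
  ring

variable [FiniteDimensional ℝ E] [MeasurableSpace E] [BorelSpace E]
  (μ : Measure E) [μ.IsAddHaarMeasure]

lemma addHaar_ball_sdiff_zero_eq_setLIntegral_boostTime (w : E) :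
    μ (ball 0 1 \ {0}) =
      ∫⁻ x in {x | boostTime w x < 1} \ {0}, ENNReal.ofReal (boostTime w x / ‖x‖) ∂μ := by
  have hs : MeasurableSet ({x | boostTime w x < 1} \ {0}) :=
    (measurableSet_lt (by fun_prop) measurable_const).diff (measurableSet_singleton _)
  rw [← image_boostSpace w, ← lintegral_abs_det_fderiv_eq_addHaar_image μ hs
    (fun x hx ↦ (hasFDerivAt_boostSpace w hx.2).differentiableAt.hasFDerivAt.hasFDerivWithinAt)
    (bijective_boostSpace w).injective.injOn]
  refine setLIntegral_congr_fun hs fun x hx ↦ ?_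
  have h_jacobian_nonneg := div_nonneg (boostTime_nonneg w x) (norm_nonneg x)
  simp only [det_fderiv_boostSpace w hx.2, abs_of_nonneg h_jacobian_nonneg]

theorem lintegral_inv_boostTime_pow_toSphere (w : E) :
    ∫⁻ ξ : sphere (0 : E) 1, ENNReal.ofReal ((boostTime w ξ)⁻¹ ^ (finrank ℝ E - 1)) ∂μ.toSphere =
      μ.toSphere univ := by
  nontriviality E using μ.toSphere_eq_zero_iff.2
  have h_jacobian_meas : Measurable fun x ↦ ENNReal.ofReal (boostTime w x / ‖x‖) :=
    ENNReal.measurable_ofReal.comp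
      ((continuous_boostTime w).measurable.div continuous_norm.measurable)
  rw [μ.toSphere_apply_univ', addHaar_ball_sdiff_zero_eq_setLIntegral_boostTime μ w,
    finrank_mul_setLIntegral_lt_one_sdiff_zero μ (continuous_boostTime w).measurable
      h_jacobian_meas (fun _ ↦ boostTime_pos w) (fun _ hr ↦ boostTime_smul w hr.le)]
  · refine lintegral_congr fun ξ ↦ ?_
    have hξ := boostTime_pos w (ne_zero_of_mem_unit_sphere ξ)
    rw [norm_eq_of_mem_sphere, div_one, ← ENNReal.ofReal_mul (by positivity),
      ← pow_sub_one_mul finrank_pos.ne', mul_assoc, inv_mul_cancel₀ hξ.ne', mul_one]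
  · intro r hr x
    rw [boostTime_smul w hr.le, norm_smul, Real.norm_of_nonneg hr.le, mul_div_mul_left _ _ hr.ne']

end LorentzBoost

section PoissonKernel

variable {E : Type*} [NormedAddCommGroup E] [InnerProductSpace ℝ E]

/-- The space coordinate of the point of the unit hyperboloid in `ℝ × E` corresponding to the point
`m` of the Poincaré ball under stereographic projection from `(-1, 0)`. -/
def hyperboloidOfBall (m : E) : E := (2 / (1 - ‖m‖ ^ 2)) • m

lemma lorentzFactor_hyperboloidOfBall {m : E} (hm : ‖m‖ < 1) :
    lorentzFactor (hyperboloidOfBall m) = (1 + ‖m‖ ^ 2) / (1 - ‖m‖ ^ 2) := by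
  have hm' : 0 < 1 - ‖m‖ ^ 2 := by nlinarith [norm_nonneg m]
  rw [lorentzFactor, Real.sqrt_eq_iff_mul_self_eq (by positivity) (by positivity),
    hyperboloidOfBall, norm_smul, mul_pow, Real.norm_eq_abs, sq_abs]
  field_simp
  ring

lemma one_sub_norm_sq_div_norm_sub_sq_eq_inv_boostTime {m : E} (hm : ‖m‖ < 1)
    (ξ : sphere (0 : E) 1) :
    (1 - ‖m‖ ^ 2) / ‖m - ξ‖ ^ 2 = (boostTime (hyperboloidOfBall m) ξ)⁻¹ := by
  have hm' : 0 < 1 - ‖m‖ ^ 2 := by nlinarith [norm_nonneg m]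
  rw [← inv_div, norm_sub_sq_real, boostTime, lorentzFactor_hyperboloidOfBall hm,
    hyperboloidOfBall, real_inner_smul_left, norm_eq_of_mem_sphere]
  congr 1
  field_simp
  ring

theorem integral_poisson_kernel_eq_volume_sphere_general [FiniteDimensional ℝ E]
    [MeasurableSpace E] [BorelSpace E] (μ : Measure E) [μ.IsAddHaarMeasure] {m : E}
    (hm : ‖m‖ < 1) :
    ∫ ξ : sphere (0 : E) 1, ((1 - ‖m‖ ^ 2) / ‖m - ξ‖ ^ 2) ^ (finrank ℝ E - 1) ∂μ.toSphere =
      μ.toSphere.real univ := by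
  set w := hyperboloidOfBall m
  have h_nonneg (ξ : sphere (0 : E) 1) : 0 ≤ (boostTime w ξ)⁻¹ ^ (finrank ℝ E - 1) :=
    pow_nonneg (inv_nonneg.2 (boostTime_nonneg w ξ)) _
  have h_meas : Measurable fun ξ : sphere (0 : E) 1 ↦ (boostTime w ξ)⁻¹ ^ (finrank ℝ E - 1) :=
    ((continuous_boostTime w).measurable.comp measurable_subtype_coe).inv.pow_const _
  simp_rw [one_sub_norm_sq_div_norm_sub_sq_eq_inv_boostTime hm]
  rw [integral_eq_lintegral_of_nonneg_ae (.of_forall h_nonneg) h_meas.aestronglyMeasurable,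
    lintegral_inv_boostTime_pow_toSphere, measureReal_def]

end PoissonKernel

/-- The integral over the unit sphere `Sⁿ ⊂ ℝ^{n+1}` (with its standard surface
measure, realized as `volume.toSphere`) of the Poisson kernel
`((1-|m|²)/|m-ξ|²)^n` equals the total surface measure `vol(Sⁿ)`, for every point
`m` of the open unit ball. -/
theorem integral_poisson_kernel_eq_volume_sphere {n : ℕ}
    (m : EuclideanSpace ℝ (Fin (n + 1))) (hm : ‖m‖ < 1) :
    ∫ ξ : Metric.sphere (0 : EuclideanSpace ℝ (Fin (n + 1))) 1,
        ((1 - ‖m‖ ^ 2) / ‖m - (ξ : EuclideanSpace ℝ (Fin (n + 1)))‖ ^ 2) ^ n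
        ∂((volume : Measure (EuclideanSpace ℝ (Fin (n + 1)))).toSphere)
      = ((volume : Measure (EuclideanSpace ℝ (Fin (n + 1)))).toSphere Set.univ).toReal := by
  simpa only [finrank_euclideanSpace_fin, Nat.add_sub_cancel, measureReal_def] using
    integral_poisson_kernel_eq_volume_sphere_general volume hm
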